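/- Let q = p^e and 0 ≤ κ < e. Let C be a Λ-MT code over F_q with index ℓ, block lengths (m_1,…,m_ℓ), and GPM G, and suppose σ^{e−κ}(Λ^{−1}) = Λ. Assume each entry in the j-th column of G has degree at most m_j, and let N = lcm(t_1 m_1,…,t_ℓ m_ℓ). Then C is κ-Galois self-orthogonal (i.e., C ⊆ C^{⊥κ}) if and only if σ^{e−κ}(G(1/x)·diag(x^{m_i}))·diag((x^N−1)/(x^{m_i}−λ_i))·G^T ≡ 0 (mod x^N−1). -/

import Mathlib

/-!
Write `φ = σ^{e-κ}`.  Since `φ ∘ σ^κ = id`, self-orthogonality of `CC` says that the form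
`B(c, v) = ∑ φ(c i j) * v i j` vanishes on `CC × CC`.

Let `P = X ^ m - C lam` be the modulus of one block and `D = (X ^ N - 1) / P`.  As
`D * f %ₘ (X ^ N - 1) = D * (f %ₘ P)`, the constant coefficient of `D * f` modulo `X ^ N - 1` is
`lam⁻¹` times that of `f` modulo `P` (`coeff_zero_div_mul_modByMonic`), and the latter turns
reversal of the first argument into the coefficientwise form (`blockForm_eq`).  Hence the constant
coefficient of `X ^ r` times the `(a, b)` entry of the matrix product, modulo `X ^ N - 1`, is
`B(G a, X ^ r • G b)`.  A polynomial is divisible by `X ^ N - 1` iff all of these coefficients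
vanish (`dvd_of_coeff_zero`), so the congruence says `B(G a, X ^ r • G b) = 0` for all `a, b, r`.

By linearity this gives `B(G a, v) = 0` for `v ∈ CC`.  Finally `B(X • q, X • h) = B(q, h)`
(`blockForm_X_mul`, where `φ(lam) = lam⁻¹` is used) and `X ^ N` acts as the identity, so
`B(X • q, h) = B(q, X ^ (N - 1) • h)` and the vanishing propagates to the whole span of the rows
in the first argument.
-/

open Polynomial Matrix

/-- constacyclic shift with constant `lam` on one block of length `m`:
`(a₀, …, a_{m-1}) ↦ (lam * a_{m-1}, a₀, …, a_{m-2})`. -/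
def blockShift {F : Type*} [Field F] (lam : F) {m : ℕ} (a : Fin m → F) : Fin m → F :=
  fun j => if j.val = 0 then lam * a ⟨m - 1, by have := j.isLt; omega⟩
           else a ⟨j.val - 1, by have := j.isLt; omega⟩

/-- `CC ⊆ ⊕ᵢ F^{m i}` is a Λ-multi-twisted code: it is invariant under the blockwise
constacyclic shift `T_Λ`. -/
def IsMT {F : Type*} [Field F] {ℓ : ℕ} (lam : Fin ℓ → F) {m : Fin ℓ → ℕ}
    (CC : Submodule F (∀ i, Fin (m i) → F)) : Prop :=
  ∀ v ∈ CC, (fun i => blockShift (lam i) (v i)) ∈ CC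

/-- from a polynomial vector in `(F[x])^ℓ` to a blocked vector: reduce component `i`
modulo `x^{m i} - λᵢ` and take the coefficients. -/
noncomputable def toCode {F : Type*} [Field F] {ℓ : ℕ} (lam : Fin ℓ → F) (m : Fin ℓ → ℕ)
    (q : Fin ℓ → Polynomial F) : ∀ i, Fin (m i) → F :=
  fun i j => ((q i) %ₘ (X ^ (m i) - Polynomial.C (lam i))).coeff j

/-- `G` is a generator polynomial matrix (GPM) of the Λ-MT code `CC`: its rows form a
minimal generating set (equivalently, since the corresponding submodule of `(F[x])^ℓ` has
rank `ℓ`, a linearly independent generating set) of the `F[x]`-submodule of `(F[x])^ℓ`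
corresponding to `CC`, namely `{q | toCode lam m q ∈ CC}`. -/
def IsGPM {F : Type*} [Field F] {ℓ : ℕ} (lam : Fin ℓ → F) (m : Fin ℓ → ℕ)
    (CC : Submodule F (∀ i, Fin (m i) → F))
    (G : Matrix (Fin ℓ) (Fin ℓ) (Polynomial F)) : Prop :=
  LinearIndependent (Polynomial F) (fun i => G i) ∧
  (Submodule.span (Polynomial F) (Set.range (fun i => G i)) :
      Set (Fin ℓ → Polynomial F)) = {q | toCode lam m q ∈ CC}

/-- κ-Galois dual of a blocked code over a field of characteristic `p`:
`{v | ∀ c ∈ C, ∑ᵢⱼ c i j * (v i j)^(p^κ) = 0}`. -/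
def galoisDualMT (p κ : ℕ) [Fact p.Prime] {F : Type*} [Field F] [CharP F p] {ℓ : ℕ}
    {m : Fin ℓ → ℕ} (CC : Submodule F (∀ i, Fin (m i) → F)) :
    Submodule F (∀ i, Fin (m i) → F) where
  carrier := {v | ∀ c ∈ CC, ∑ i, ∑ j, c i j * (v i j) ^ p ^ κ = 0}
  zero_mem' := by
    intro c hc
    have hp : p ^ κ ≠ 0 := pow_ne_zero κ (Nat.Prime.ne_zero Fact.out)
    simp [zero_pow hp]
  add_mem' := by
    intro a b ha hb c hc
    haveI : ExpChar F p := ExpChar.prime Fact.out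
    simp only [Set.mem_setOf_eq] at *
    have h1 : ∀ i j, ((a + b) i j) ^ p ^ κ = (a i j) ^ p ^ κ + (b i j) ^ p ^ κ := by
      intro i j; simp only [Pi.add_apply]; exact add_pow_expChar_pow (a i j) (b i j) p κ
    simp only [h1, mul_add, Finset.sum_add_distrib, ha c hc, hb c hc, add_zero]
  smul_mem' := by
    intro r v hv c hc
    simp only [Set.mem_setOf_eq] at *
    have h1 : ∀ i, ∑ j, c i j * ((r • v) i j) ^ p ^ κ
        = r ^ p ^ κ * ∑ j, c i j * (v i j) ^ p ^ κ := by
      intro i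
      rw [Finset.mul_sum]
      exact Finset.sum_congr rfl
        (fun j _ => by simp only [Pi.smul_apply, smul_eq_mul, mul_pow]; ring)
    simp only [h1, ← Finset.mul_sum, hv c hc, mul_zero]

/-- the `p^t`-power map `a ↦ a^(p^t)` (iterated Frobenius) as a ring homomorphism. -/
def powFrob (F : Type*) [Field F] (p t : ℕ) [Fact p.Prime] [CharP F p] : F →+* F where
  toFun a := a ^ p ^ t
  map_one' := one_pow _
  map_mul' a b := mul_pow a b _
  map_zero' := zero_pow (pow_ne_zero t (Nat.Prime.ne_zero Fact.out))
  map_add' a b := by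
    haveI : ExpChar F p := ExpChar.prime Fact.out
    exact add_pow_expChar_pow a b p t

/-! ### Residues modulo `X ^ m - lam` and the form on one block -/

section Block

variable {F : Type*} [Field F]

theorem monic_mod {m : ℕ} (hm : 0 < m) (lam : F) : (X ^ m - Polynomial.C lam).Monic :=
  monic_X_pow_sub_C lam hm.ne'

theorem degree_modByMonic_block {m : ℕ} (hm : 0 < m) (lam : F) (f : F[X]) :
    (f %ₘ (X ^ m - Polynomial.C lam)).degree < m := by
  have := degree_modByMonic_lt f (monic_mod hm lam)
  rwa [degree_X_pow_sub_C hm] at this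

theorem natDegree_modByMonic_block {m : ℕ} (hm : 0 < m) (lam : F) (f : F[X]) :
    (f %ₘ (X ^ m - Polynomial.C lam)).natDegree < m := by
  by_cases h : f %ₘ (X ^ m - Polynomial.C lam) = 0
  · rwa [h, natDegree_zero]
  · exact (natDegree_lt_iff_degree_lt h).2 (degree_modByMonic_block hm lam f)

theorem X_pow_modByMonic_of_lt {m s : ℕ} (hm : 0 < m) (lam : F) (hs : s < m) :
    (X ^ s : F[X]) %ₘ (X ^ m - Polynomial.C lam) = X ^ s := by
  rw [modByMonic_eq_self_iff (monic_mod hm lam), degree_X_pow_sub_C hm, degree_X_pow]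
  exact_mod_cast hs

theorem X_pow_add_modByMonic {m s : ℕ} (hm : 0 < m) (lam : F) (hs : s < m) :
    (X ^ (m + s) : F[X]) %ₘ (X ^ m - Polynomial.C lam) = Polynomial.C lam * X ^ s := by
  refine (div_modByMonic_unique (X ^ s) _ (monic_mod hm lam) ⟨by ring, ?_⟩).2
  rw [degree_X_pow_sub_C hm]
  refine lt_of_le_of_lt (degree_C_mul_X_pow_le s lam) ?_
  exact_mod_cast hs

/-- Coefficient `s` of a residue is read off at degree `0` after multiplication by `X ^ (m - s)`. -/
theorem coeff_zero_X_pow_mul {m s : ℕ} (hm : 0 < m) (lam : F) (hs : s < m) (f : F[X]) :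
    ((X ^ (m - s) * f) %ₘ (X ^ m - Polynomial.C lam)).coeff 0
      = lam * (f %ₘ (X ^ m - Polynomial.C lam)).coeff s := by
  set P : F[X] := X ^ m - Polynomial.C lam with hP
  have hmon : P.Monic := monic_mod hm lam
  have key : ∀ g : F[X], g.natDegree ≤ m - 1 →
      ((X ^ (m - s) * g) %ₘ P).coeff 0 = lam * g.coeff s := by
    intro g hg
    refine Polynomial.induction_with_natDegree_le
      (fun g => ((X ^ (m - s) * g) %ₘ P).coeff 0 = lam * g.coeff s) (m - 1) ?_ ?_ ?_ g hg
    · simp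
    · intro n r _ hn
      have h1 : X ^ (m - s) * (Polynomial.C r * X ^ n) = r • (X ^ (m - s + n) : F[X]) := by
        rw [smul_eq_C_mul]; ring
      rw [h1, smul_modByMonic, coeff_smul]
      rcases lt_or_ge (m - s + n) m with h | h
      · rw [hP, X_pow_modByMonic_of_lt hm lam h, coeff_C_mul, coeff_X_pow, coeff_X_pow,
          if_neg (by omega), if_neg (by omega)]
        simp
      · have h2 : m - s + n = m + (n - s) := by omega
        rw [h2, hP, X_pow_add_modByMonic hm lam (by omega), coeff_C_mul, coeff_C_mul, coeff_X_pow,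
          coeff_X_pow]
        by_cases h3 : s = n
        · rw [if_pos (by omega), if_pos h3, smul_eq_mul]; ring
        · rw [if_neg (by omega), if_neg h3]; simp
    · intro f g _ _ hf hg'
      rw [mul_add, add_modByMonic, coeff_add, hf, hg', coeff_add, mul_add]
  have hdeg : (f %ₘ P).natDegree ≤ m - 1 := by
    have h := natDegree_modByMonic_block hm lam f
    rw [← hP] at h
    omega
  rw [← key _ hdeg]
  congr 1
  rw [mul_modByMonic (X ^ (m - s)) f, mul_modByMonic (X ^ (m - s)) (f %ₘ P)]
  rw [(modByMonic_eq_self_iff hmon).2 (degree_modByMonic_lt f hmon)]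

/-- The constant coefficients of all shifts of `f` modulo `X ^ N - 1` determine its residue. -/
theorem dvd_of_coeff_zero {N : ℕ} (hN : 0 < N) (f : F[X])
    (h : ∀ r, ((X ^ r * f) %ₘ (X ^ N - 1)).coeff 0 = 0) : (X ^ N - 1 : F[X]) ∣ f := by
  have e : (X ^ N - 1 : F[X]) = X ^ N - Polynomial.C 1 := by simp
  rw [e] at h ⊢
  rw [← modByMonic_eq_zero_iff_dvd (monic_mod hN 1)]
  ext s
  rcases lt_or_ge s N with hs | hs
  · have := h (N - s)
    rw [coeff_zero_X_pow_mul hN 1 hs, one_mul] at this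
    simpa using this
  · rw [coeff_zero]
    apply coeff_eq_zero_of_degree_lt
    refine (degree_modByMonic_block hN 1 f).trans_le ?_
    exact_mod_cast hs

theorem mod_dvd {m N : ℕ} {lam : F} (hN : orderOf lam * m ∣ N) :
    (X ^ m - Polynomial.C lam) ∣ (X ^ N - 1 : F[X]) := by
  obtain ⟨M, rfl⟩ := hN
  have h := sub_dvd_pow_sub_pow (X ^ m : F[X]) (Polynomial.C lam) (orderOf lam * M)
  rw [← C_pow, pow_mul lam, pow_orderOf_eq_one, one_pow, ← pow_mul, C_1] at h
  convert h using 3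
  ring

/-- Multiplication by `(X ^ N - 1) / (X ^ m - lam)` turns residues modulo `X ^ m - lam` into residues
modulo `X ^ N - 1`; the factor `lam⁻¹` is the constant coefficient of this cofactor. -/
theorem coeff_zero_div_mul_modByMonic {m N : ℕ} (hm : 0 < m) (hN0 : 0 < N) {lam : F}
    (hN : orderOf lam * m ∣ N) (f : F[X]) :
    (((X ^ N - 1) / (X ^ m - Polynomial.C lam) * f) %ₘ (X ^ N - 1)).coeff 0
      = lam⁻¹ * (f %ₘ (X ^ m - Polynomial.C lam)).coeff 0 := by
  set P : F[X] := X ^ m - Polynomial.C lam with hP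
  have hmon : P.Monic := monic_mod hm lam
  have hQ : (X ^ N - 1 : F[X]).Monic := by
    have := monic_mod hN0 (1 : F); rwa [C_1] at this
  obtain ⟨D, hD⟩ : P ∣ (X ^ N - 1 : F[X]) := mod_dvd hN
  have hDdiv : (X ^ N - 1 : F[X]) / P = D := by
    rw [hD, mul_div_cancel_left₀ _ hmon.ne_zero]
  have hDmon : D.Monic := hmon.of_mul_monic_left (hD ▸ hQ)
  rw [hDdiv]
  have h1 : (D * f) %ₘ (X ^ N - 1) = D * (f %ₘ P) := by
    refine (div_modByMonic_unique (f /ₘ P) _ hQ ⟨?_, ?_⟩).2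
    · conv_rhs => rw [← modByMonic_add_div f P]
      rw [hD]; ring
    · rw [hD, mul_comm P D, degree_mul, degree_mul]
      exact WithBot.add_lt_add_left (degree_ne_bot.2 hDmon.ne_zero) (degree_modByMonic_lt f hmon)
  rw [h1, mul_coeff_zero]
  congr 1
  have h2 := congrArg (fun g : F[X] => g.coeff 0) hD
  simp only [mul_coeff_zero, hP, coeff_sub, coeff_X_pow, coeff_one_zero, coeff_C_zero,
    if_neg hN0.ne, if_neg hm.ne, zero_sub] at h2
  exact eq_inv_of_mul_eq_one_right (by linear_combination h2)

/-- The form `∑ φ(aₛ) * bₛ` on one block, evaluated on the residues of two polynomials. -/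
noncomputable def blockForm (φ : F →+* F) (m : ℕ) (lam : F) (g h : F[X]) : F :=
  ∑ s : Fin m, φ ((g %ₘ (X ^ m - Polynomial.C lam)).coeff s) *
    (h %ₘ (X ^ m - Polynomial.C lam)).coeff s

theorem blockForm_add_left (φ : F →+* F) (m : ℕ) (lam : F) (g g' h : F[X]) :
    blockForm φ m lam (g + g') h = blockForm φ m lam g h + blockForm φ m lam g' h := by
  simp [blockForm, add_modByMonic, add_mul, Finset.sum_add_distrib]

theorem blockForm_add_right (φ : F →+* F) (m : ℕ) (lam : F) (g h h' : F[X]) :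
    blockForm φ m lam g (h + h') = blockForm φ m lam g h + blockForm φ m lam g h' := by
  simp [blockForm, add_modByMonic, mul_add, Finset.sum_add_distrib]

theorem blockForm_C_mul_left (φ : F →+* F) (m : ℕ) (lam a : F) (g h : F[X]) :
    blockForm φ m lam (Polynomial.C a * g) h = φ a * blockForm φ m lam g h := by
  simp [blockForm, ← smul_eq_C_mul, smul_modByMonic, mul_assoc, Finset.mul_sum]

theorem blockForm_C_mul_right (φ : F →+* F) (m : ℕ) (lam a : F) (g h : F[X]) :
    blockForm φ m lam g (Polynomial.C a * h) = a * blockForm φ m lam g h := by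
  simp [blockForm, ← smul_eq_C_mul, smul_modByMonic, mul_left_comm, Finset.mul_sum]

theorem blockForm_X_pow {φ : F →+* F} {m : ℕ} {lam : F} {s : ℕ} (hs : s < m) (h : F[X]) :
    blockForm φ m lam (X ^ s) h = (h %ₘ (X ^ m - Polynomial.C lam)).coeff s := by
  have hm : 0 < m := by omega
  rw [blockForm, X_pow_modByMonic_of_lt hm lam hs, Finset.sum_eq_single (⟨s, hs⟩ : Fin m)]
  · simp
  · intro b _ hb
    have : (b : ℕ) ≠ s := fun h' => hb (Fin.ext h')
    simp [coeff_X_pow, this]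
  · simp

/-- The block form is the constant coefficient of `x ^ m * φ(g)(1/x) * h` modulo `x ^ m - lam`,
up to the factor `lam⁻¹`. -/
theorem blockForm_eq {φ : F →+* F} {m : ℕ} (hm : 0 < m) {lam : F} (hlam : lam ≠ 0)
    (hφ : φ lam = lam⁻¹) {g : F[X]} (hg : g.natDegree ≤ m) (h : F[X]) :
    lam⁻¹ * ((Polynomial.map φ (reflect m g) * h) %ₘ (X ^ m - Polynomial.C lam)).coeff 0
      = blockForm φ m lam g h := by
  refine Polynomial.induction_with_natDegree_le
    (fun g => lam⁻¹ * ((Polynomial.map φ (reflect m g) * h) %ₘ (X ^ m - Polynomial.C lam)).coeff 0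
      = blockForm φ m lam g h) m ?_ ?_ ?_ g hg
  · simp [blockForm]
  · intro n r _ hn
    rw [reflect_C_mul_X_pow, revAt_le hn, blockForm_C_mul_left, Polynomial.map_mul, map_C,
      Polynomial.map_pow, map_X, mul_assoc, ← smul_eq_C_mul, smul_modByMonic, coeff_smul,
      smul_eq_mul]
    rcases hn.lt_or_eq with hn' | rfl
    · rw [blockForm_X_pow hn', coeff_zero_X_pow_mul hm lam hn']
      field_simp
    · have h1 : blockForm φ n lam (X ^ n) h = blockForm φ n lam (Polynomial.C lam * X ^ 0) h := by
        have h2 := X_pow_add_modByMonic hm lam hm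
        have h3 : (Polynomial.C lam * X ^ 0 : F[X]) %ₘ (X ^ n - Polynomial.C lam)
            = Polynomial.C lam * X ^ 0 := by
          rw [← smul_eq_C_mul, smul_modByMonic, X_pow_modByMonic_of_lt hm lam hm]
        rw [add_zero] at h2
        rw [blockForm, blockForm, h2, h3]
      rw [h1, blockForm_C_mul_left, blockForm_X_pow hm, hφ, Nat.sub_self, pow_zero, one_mul]
      ring
  · intro f g _ _ hf hg'
    rw [reflect_add, Polynomial.map_add, add_mul, add_modByMonic, coeff_add, mul_add,
      hf, hg', blockForm_add_left]

theorem blockForm_congr {φ : F →+* F} {m : ℕ} {lam : F} {g g' h h' : F[X]}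
    (hg : g %ₘ (X ^ m - Polynomial.C lam) = g' %ₘ (X ^ m - Polynomial.C lam))
    (hh : h %ₘ (X ^ m - Polynomial.C lam) = h' %ₘ (X ^ m - Polynomial.C lam)) :
    blockForm φ m lam g h = blockForm φ m lam g' h' := by
  rw [blockForm, blockForm, hg, hh]

/-- The constacyclic shift is an isometry of the block form. -/
theorem blockForm_X_mul {φ : F →+* F} {m : ℕ} (hm : 0 < m) {lam : F} (hlam : lam ≠ 0)
    (hφ : φ lam = lam⁻¹) (g h : F[X]) :
    blockForm φ m lam (X * g) (X * h) = blockForm φ m lam g h := by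
  set P : F[X] := X ^ m - Polynomial.C lam with hP
  have hmon : P.Monic := monic_mod hm lam
  have hself : (g %ₘ P) %ₘ P = g %ₘ P :=
    (modByMonic_eq_self_iff hmon).2 (degree_modByMonic_lt g hmon)
  have hdeg : (g %ₘ P).natDegree < m :=
    natDegree_modByMonic_block hm lam g
  have h1 : blockForm φ m lam (X * g) (X * h) = blockForm φ m lam (X * (g %ₘ P)) (X * h) := by
    refine blockForm_congr ?_ rfl
    rw [← hP, mul_modByMonic X g, mul_modByMonic X (g %ₘ P), hself]
  have h2 : blockForm φ m lam g h = blockForm φ m lam (g %ₘ P) h :=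
    blockForm_congr hself.symm rfl
  have hX : (X * (g %ₘ P)).natDegree ≤ m :=
    natDegree_mul_le.trans (by rw [natDegree_X]; omega)
  rw [h1, h2, ← blockForm_eq hm hlam hφ hX, ← blockForm_eq hm hlam hφ hdeg.le]
  -- Reversal satisfies `X * reflect m (X * q) = reflect m q` whenever `q` has degree `< m`.
  have h3 : X * reflect m (X * (g %ₘ P)) = reflect m (g %ₘ P) := by
    ext n
    rcases n with _ | n
    · rw [mul_coeff_zero, coeff_X_zero, zero_mul, coeff_reflect, revAt_le (Nat.zero_le _),
        coeff_eq_zero_of_natDegree_lt (by omega)]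
    · rw [coeff_X_mul, coeff_reflect, coeff_reflect]
      rcases lt_or_ge n m with hn | hn
      · rw [revAt_le hn.le, revAt_le hn, show m - n = (m - (n + 1)) + 1 by omega, coeff_X_mul]
      · rw [revAt_eq_self_of_lt (show m < n + 1 by omega),
          coeff_eq_zero_of_natDegree_lt (show (g %ₘ P).natDegree < n + 1 by omega)]
        rcases hn.lt_or_eq with hn' | rfl
        · rw [revAt_eq_self_of_lt hn', coeff_eq_zero_of_natDegree_lt (by omega)]
        · rw [revAt_le le_rfl, Nat.sub_self, mul_coeff_zero, coeff_X_zero, zero_mul]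
  have h4 : Polynomial.map φ (reflect m (X * (g %ₘ P))) * (X * h)
      = Polynomial.map φ (reflect m (g %ₘ P)) * h := by
    rw [← h3, Polynomial.map_mul, map_X]; ring
  rw [h4]

theorem X_pow_mul_modByMonic {m N : ℕ} {lam : F} (hm : 0 < m) (hN : orderOf lam * m ∣ N)
    (h : F[X]) :
    (X ^ N * h) %ₘ (X ^ m - Polynomial.C lam) = h %ₘ (X ^ m - Polynomial.C lam) := by
  rw [← sub_eq_zero, ← sub_modByMonic, modByMonic_eq_zero_iff_dvd (monic_mod hm lam)]
  exact (mod_dvd hN).trans ⟨h, by ring⟩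

end Block

/-! ### The form on polynomial vectors -/

section Code

variable {F : Type*} [Field F] {ℓ : ℕ}

/-- The form `∑ φ(c i j) * v i j` evaluated on the codewords of two polynomial vectors. -/
noncomputable def codeForm (φ : F →+* F) (m : Fin ℓ → ℕ) (lam : Fin ℓ → F)
    (q h : Fin ℓ → F[X]) : F :=
  ∑ i, blockForm φ (m i) (lam i) (q i) (h i)

/-- The adjoint of multiplication by `X` is multiplication by `X ^ (N - 1)`. -/
theorem codeForm_X_mul_left {φ : F →+* F} {m : Fin ℓ → ℕ} {lam : Fin ℓ → F} {N : ℕ}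
    (hm : ∀ i, 0 < m i) (hlam : ∀ i, lam i ≠ 0) (hφ : ∀ i, φ (lam i) = (lam i)⁻¹) (hN0 : 0 < N)
    (hN : ∀ i, orderOf (lam i) * m i ∣ N) (q h : Fin ℓ → F[X]) :
    codeForm φ m lam ((X : F[X]) • q : Fin ℓ → F[X]) h
      = codeForm φ m lam q ((X : F[X]) ^ (N - 1) • h : Fin ℓ → F[X]) := by
  refine Finset.sum_congr rfl fun i _ => ?_
  rw [Pi.smul_apply, Pi.smul_apply, smul_eq_mul, smul_eq_mul,
    ← blockForm_X_mul (hm i) (hlam i) (hφ i) (q i), ← mul_assoc, ← pow_succ',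
    Nat.sub_add_cancel hN0]
  exact blockForm_congr rfl (X_pow_mul_modByMonic (hm i) (hN i) (h i)).symm

/-- A set containing `S` and closed under addition, scaling by constants and multiplication by `X`
contains the `F[X]`-span of `S`.  Used for sets of vectors on which `codeForm` vanishes, where
linearity over `F[X]` is not available. -/
theorem span_le_of_closed {W : Set (Fin ℓ → F[X])} {S : Set (Fin ℓ → F[X])} (hS : S ⊆ W)
    (h0 : 0 ∈ W) (hadd : ∀ a ∈ W, ∀ b ∈ W, a + b ∈ W)
    (hC : ∀ (r : F), ∀ a ∈ W, (Polynomial.C r • a : Fin ℓ → F[X]) ∈ W)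
    (hX : ∀ a ∈ W, ((X : F[X]) • a : Fin ℓ → F[X]) ∈ W) :
    (Submodule.span F[X] S : Set (Fin ℓ → F[X])) ⊆ W := by
  intro q hq
  have hXn : ∀ (n : ℕ), ∀ a ∈ W, ((X : F[X]) ^ n • a : Fin ℓ → F[X]) ∈ W := by
    intro n
    induction n with
    | zero => intro a ha; simpa using ha
    | succ n ih => intro a ha; rw [pow_succ', mul_smul]; exact hX _ (ih a ha)
  refine Submodule.span_induction (p := fun q _ => q ∈ W) (fun x hx => hS hx) h0
    (fun a b _ _ ha hb => hadd a ha b hb) (fun f a _ ha => ?_) hq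
  induction f using Polynomial.induction_on' with
  | add f g hf hg => rw [add_smul]; exact hadd _ hf _ hg
  | monomial n r =>
    rw [← C_mul_X_pow_eq_monomial, mul_smul]
    exact hC _ _ (hXn n a ha)

theorem toCode_surjective {m : Fin ℓ → ℕ} (hm : ∀ i, 0 < m i) (lam : Fin ℓ → F)
    (v : ∀ i, Fin (m i) → F) : ∃ q, toCode lam m q = v := by
  refine ⟨fun i => ∑ s : Fin (m i), Polynomial.C (v i s) * X ^ (s : ℕ), ?_⟩
  funext i j
  have hd : (∑ s : Fin (m i), Polynomial.C (v i s) * X ^ (s : ℕ) : F[X]).degree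
      < (m i : WithBot ℕ) := by
    refine (degree_sum_le _ _).trans_lt ?_
    rw [Finset.sup_lt_iff (WithBot.bot_lt_coe _)]
    intro s _
    refine (degree_C_mul_X_pow_le _ _).trans_lt ?_
    exact_mod_cast s.2
  change ((_ : F[X]) %ₘ (X ^ m i - Polynomial.C (lam i))).coeff (j : ℕ) = v i j
  rw [(modByMonic_eq_self_iff (monic_mod (hm i) (lam i))).2
    (by rwa [degree_X_pow_sub_C (hm i)]), finsetSum_coeff, Finset.sum_eq_single j]
  · simp
  · intro b _ hb
    have : (j : ℕ) ≠ b := fun h' => hb (Fin.ext h'.symm)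
    simp [coeff_X_pow, this]
  · simp

end Code

/-- Let `q = p^e`, `0 ≤ κ < e`, and let `C` be a Λ-MT code with GPM `G`
such that `σ^{e-κ}(Λ⁻¹) = Λ`, with entries of column `j` of `G` of degree at most `mⱼ`
and `N = lcm(tᵢ mᵢ)`.  Then `C` is κ-Galois self-orthogonal iff
`σ^{e-κ}(G(1/x)·diag(x^{mᵢ}))·diag((x^N-1)/(x^{mᵢ}-λᵢ))·Gᵀ ≡ 0 (mod x^N-1)`. -/
theorem stmt16 {p e : ℕ} [Fact p.Prime] {F : Type*} [Field F] [Fintype F] [CharP F p]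
    (hcard : Fintype.card F = p ^ e) {κ : ℕ} (hκ : κ < e)
    {ℓ : ℕ} {m : Fin ℓ → ℕ} (hm : ∀ i, 0 < m i)
    {lam : Fin ℓ → F} (hlam : ∀ i, lam i ≠ 0)
    (hσΛ : ∀ i, ((lam i)⁻¹) ^ p ^ (e - κ) = lam i)
    (CC : Submodule F (∀ i, Fin (m i) → F)) (hC : IsMT lam CC)
    (G : Matrix (Fin ℓ) (Fin ℓ) (Polynomial F)) (hG : IsGPM lam m CC G)
    (hdeg : ∀ i j, (G i j).natDegree ≤ m j)
    {N : ℕ} (hN : N = Finset.univ.lcm (fun i => orderOf (lam i) * m i)) :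
    CC ≤ galoisDualMT p κ CC ↔
      ∀ i j : Fin ℓ, (X ^ N - 1 : Polynomial F) ∣
        (((Matrix.of fun a b =>
            Polynomial.map (powFrob F p (e - κ)) (Polynomial.reflect (m b) (G a b))) *
          Matrix.diagonal (fun i => (X ^ N - 1) / (X ^ (m i) - Polynomial.C (lam i))) *
          G.transpose : Matrix (Fin ℓ) (Fin ℓ) (Polynomial F))) i j := by
  set φ := powFrob F p (e - κ) with hφdef
  have hφ : ∀ i, φ (lam i) = (lam i)⁻¹ := fun i => by
    have h1 : (φ (lam i))⁻¹ = lam i := by rw [← map_inv₀]; exact hσΛ i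
    rw [← h1, inv_inv, h1]
  have hdvd : ∀ i, orderOf (lam i) * m i ∣ N := fun i => by
    rw [hN]
    exact Finset.dvd_lcm (f := fun i => orderOf (lam i) * m i) (Finset.mem_univ i)
  have hN0 : 0 < N := by
    rw [hN, Nat.pos_iff_ne_zero, Ne, Finset.lcm_eq_zero_iff]
    rintro ⟨i, -, hi⟩
    have h1 : 0 < orderOf (lam i) := by
      rw [← Units.val_mk0 (hlam i), orderOf_units]; exact orderOf_pos _
    exact (Nat.mul_pos h1 (hm i)).ne' hi
  have hQ : (X ^ N - 1 : F[X]).Monic := by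
    have := monic_mod hN0 (1 : F); rwa [C_1] at this
  have hmem : ∀ q, q ∈ Submodule.span F[X] (Set.range fun i => G i) ↔ toCode lam m q ∈ CC :=
    fun q => Set.ext_iff.1 hG.2 q
  -- Applying `φ` to the defining equation of the dual moves the Frobenius to the first argument.
  have hself : CC ≤ galoisDualMT p κ CC ↔
      ∀ q ∈ Submodule.span F[X] (Set.range fun i => G i),
      ∀ h ∈ Submodule.span F[X] (Set.range fun i => G i), codeForm φ m lam q h = 0 := by
    have hpow : ∀ a : F, φ (a ^ p ^ κ) = a := fun a => by
      change (a ^ p ^ κ) ^ p ^ (e - κ) = a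
      rw [← pow_mul, ← pow_add, Nat.add_sub_cancel' hκ.le, ← hcard, FiniteField.pow_card]
    have hform : ∀ q h, codeForm φ m lam q h
        = φ (∑ i, ∑ j, toCode lam m q i j * (toCode lam m h i j) ^ p ^ κ) := fun q h => by
      simp only [map_sum, map_mul, hpow]; rfl
    constructor
    · intro H q hq h hh
      rw [hform, H ((hmem h).1 hh) _ ((hmem q).1 hq), map_zero]
    · intro H v hv c hc
      obtain ⟨q, rfl⟩ := toCode_surjective hm lam c
      obtain ⟨h, rfl⟩ := toCode_surjective hm lam v
      have := H q ((hmem q).2 hc) h ((hmem h).2 hv)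
      rw [hform] at this
      exact (map_eq_zero φ).1 this
  have hentry : ∀ a b r,
      ((X ^ r * ((Matrix.of fun a b => Polynomial.map φ (Polynomial.reflect (m b) (G a b))) *
          Matrix.diagonal (fun i => (X ^ N - 1) / (X ^ (m i) - Polynomial.C (lam i))) *
          G.transpose : Matrix (Fin ℓ) (Fin ℓ) (Polynomial F)) a b) %ₘ (X ^ N - 1)).coeff 0
        = codeForm φ m lam (G a) ((X : F[X]) ^ r • G b : Fin ℓ → F[X]) := by
    intro a b r
    have hlin : ∀ f : Fin ℓ → F[X], ((∑ i, f i) %ₘ (X ^ N - 1)).coeff 0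
        = ∑ i, (f i %ₘ (X ^ N - 1)).coeff 0 := fun f => by
      have := map_sum (modByMonicHom (X ^ N - 1 : F[X])) f Finset.univ
      simp only [modByMonicHom_apply] at this
      rw [this, finsetSum_coeff]
    rw [Matrix.mul_apply, Finset.mul_sum, hlin, codeForm]
    refine Finset.sum_congr rfl fun i _ => ?_
    rw [Matrix.mul_diagonal, Matrix.transpose_apply, Matrix.of_apply,
      ← blockForm_eq (hm i) (hlam i) (hφ i) (hdeg a i),
      ← coeff_zero_div_mul_modByMonic (hm i) hN0 (hdvd i), Pi.smul_apply, smul_eq_mul]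
    congr 2
    ring
  have hrow : ∀ a, G a ∈ Submodule.span F[X] (Set.range fun i => G i) :=
    fun a => Submodule.subset_span ⟨a, rfl⟩
  rw [hself]
  constructor
  · intro H a b
    refine dvd_of_coeff_zero hN0 _ fun r => ?_
    rw [hentry]
    exact H _ (hrow a) _ (Submodule.smul_mem _ _ (hrow b))
  · intro H
    have h1 : ∀ a b r, codeForm φ m lam (G a) ((X : F[X]) ^ r • G b : Fin ℓ → F[X]) = 0 := by
      intro a b r
      rw [← hentry, (modByMonic_eq_zero_iff_dvd hQ).2 ((H a b).mul_left _), coeff_zero]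
    have h2 : ∀ a, ∀ h ∈ Submodule.span F[X] (Set.range fun i => G i),
        codeForm φ m lam (G a) h = 0 := by
      intro a h hh
      -- Quantifying over all shifts `X ^ r` makes the set visibly closed under `X`.
      have := span_le_of_closed
        (W := {h | ∀ r : ℕ, codeForm φ m lam (G a) ((X : F[X]) ^ r • h : Fin ℓ → F[X]) = 0})
        (S := Set.range fun i => G i) ?_ ?_ ?_ ?_ ?_ hh 0
      · simpa using this
      · rintro _ ⟨b, rfl⟩ r
        exact h1 a b r
      · intro r; simp [codeForm, blockForm]
      · intro x hx y hy r
        have hx' := hx r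
        have hy' := hy r
        simp only [codeForm, Pi.smul_apply, Pi.add_apply, smul_add, blockForm_add_right,
          Finset.sum_add_distrib] at hx' hy' ⊢
        rw [hx', hy', add_zero]
      · intro c x hx r
        have hx' := hx r
        rw [smul_comm]
        simp only [codeForm, Pi.smul_apply, smul_eq_mul, blockForm_C_mul_right,
          ← Finset.mul_sum] at hx' ⊢
        rw [hx', mul_zero]
      · intro x hx r
        rw [← mul_smul, ← pow_succ]
        exact hx (r + 1)
    intro q hq
    have := span_le_of_closed
      (W := {q | ∀ h ∈ Submodule.span F[X] (Set.range fun i => G i), codeForm φ m lam q h = 0})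
      (S := Set.range fun i => G i) ?_ ?_ ?_ ?_ ?_ hq
    · exact this
    · rintro _ ⟨a, rfl⟩
      exact h2 a
    · intro h _; simp [codeForm, blockForm]
    · intro x hx y hy h hh
      have hx' := hx h hh
      have hy' := hy h hh
      simp only [codeForm, Pi.add_apply, blockForm_add_left, Finset.sum_add_distrib] at hx' hy' ⊢
      rw [hx', hy', add_zero]
    · intro c x hx h hh
      have hx' := hx h hh
      simp only [codeForm, Pi.smul_apply, smul_eq_mul, blockForm_C_mul_left,
        ← Finset.mul_sum] at hx' ⊢
      rw [hx', mul_zero]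
    · intro x hx h hh
      rw [codeForm_X_mul_left hm hlam hφ hN0 hdvd]
      exact hx _ (Submodule.smul_mem _ _ hh)
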